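/- For any metric space (X,d) the following are equivalent: (1) U(X) is a ring and every Bourbaki bounded subset of X is totally bounded; (2) there exists a totally bounded set L ⊆ X such that for each ε > 0 the set X \ B(L,ε) is uniformly isolated; (3) the completion of (X,d) is a UC-space. -/

import Mathlib

/-- `U(X)` is a ring: the pointwise product of any two uniformly continuous
real-valued functions on `X` is uniformly continuous. -/
def IsRingUC (X : Type*) [MetricSpace X] : Prop :=
  ∀ f g : X → ℝ, UniformContinuous f → UniformContinuous g →
    UniformContinuous (fun x => f x * g x)

/-- `A` is Bourbaki bounded in `X`: every uniformly continuous real-valued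
function on `X` is bounded on `A`. -/
def BourbakiBounded {X : Type*} [MetricSpace X] (A : Set X) : Prop :=
  ∀ f : X → ℝ, UniformContinuous f → ∃ M : ℝ, ∀ x ∈ A, |f x| ≤ M

/-- `A` is uniformly isolated: there is `ε > 0` such that `B(x,ε) = {x}` for all `x ∈ A`. -/
def UnifIsolated {X : Type*} [MetricSpace X] (A : Set X) : Prop :=
  ∃ ε > (0 : ℝ), ∀ x ∈ A, Metric.ball x ε = {x}

/-- The open `ε`-enlargement `B(F,ε)` of a set `F`. -/
def enl {X : Type*} [MetricSpace X] (F : Set X) (ε : ℝ) : Set X :=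
  ⋃ x ∈ F, Metric.ball x ε

/-!
Call a point `δ`-crowded if some other point lies within distance `δ` of it. All three conditions
say that the `δ`-crowded points can be covered by finitely many `ε`-balls once `δ` is small
enough. If this fails, there are an `ε`-separated sequence `x n` and points `y n ≠ x n` with
`dist (y n) (x n) → 0`. A continuous function on the completion that is `0` at every `x n` and `1`
at every `y n` is then not uniformly continuous. If moreover some uniformly continuous `h` is
unbounded along `x`, then after passing to a subsequence a sum of narrow bumps of height `2⁻ⁿ` at
`x n` has a product with `h` that is not uniformly continuous.
-/

open Filter Metric Set Topology Uniformity

theorem uniformContinuous_tsum {α β E : Type*} [UniformSpace β] [NormedAddCommGroup E]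
    [CompleteSpace E] {f : α → β → E} {u : α → ℝ} (hu : Summable u)
    (hf : ∀ i, UniformContinuous (f i)) (hfu : ∀ i x, ‖f i x‖ ≤ u i) :
    UniformContinuous fun x => ∑' i, f i x :=
  (tendstoUniformly_tsum hu hfu).uniformContinuous <| Frequently.of_forall fun s =>
    s.uniformContinuous_sum fun i _ => hf i

theorem exists_strictMono_forall_lt_of_not_bddAbove {α : Type*} [LinearOrder α] {u : ℕ → α}
    (hu : ¬ BddAbove (range u)) (c : ℕ → α) : ∃ φ : ℕ → ℕ, StrictMono φ ∧ ∀ n, c n < u (φ n) := by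
  refine extraction_forall_of_frequently (P := fun n m => c n < u m) fun n => ?_
  contrapose! hu
  exact (isBoundedUnder_of_eventually_le hu).bddAbove_range

theorem uniformContinuous_of_comp_coe_completion {X Y : Type*} [UniformSpace X] [UniformSpace Y]
    [CompleteSpace Y] [T0Space Y] {f : UniformSpace.Completion X → Y} (hf : Continuous f)
    (hfX : UniformContinuous fun x : X => f x) : UniformContinuous f := by
  have hext : UniformSpace.Completion.extension (fun x : X => f x) = f :=
    UniformSpace.Completion.ext UniformSpace.Completion.continuous_extension hf
      (UniformSpace.Completion.extension_coe hfX)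
  exact hext ▸ UniformSpace.Completion.uniformContinuous_extension

section PseudoMetric

variable {X : Type*} [PseudoMetricSpace X]

theorem totallyBounded_iff_subset_thickening {s : Set X} :
    TotallyBounded s ↔ ∀ ε > 0, ∃ t : Set X, t.Finite ∧ s ⊆ thickening ε t := by
  simp only [totallyBounded_iff, thickening_eq_biUnion_ball]

theorem totallyBounded_iUnion_of_eventually_subset_thickening {F : ℕ → Set X}
    (hF : ∀ k, TotallyBounded (F k))
    (htail : ∀ ε > 0, ∃ t : Set X, t.Finite ∧ ∀ᶠ k in atTop, F k ⊆ thickening ε t) :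
    TotallyBounded (⋃ k, F k) := by
  refine totallyBounded_iff_subset_thickening.2 fun ε hε => ?_
  obtain ⟨t, ht, hFt⟩ := htail ε hε
  obtain ⟨N, hN⟩ := eventually_atTop.1 hFt
  have hinitial : TotallyBounded (⋃ j ∈ Iio N, F j) :=
    (totallyBounded_biUnion (finite_Iio N)).2 fun j _ => hF j
  obtain ⟨u, hu, hFu⟩ := totallyBounded_iff_subset_thickening.1 hinitial ε hε
  refine ⟨u ∪ t, hu.union ht, iUnion_subset fun k => ?_⟩
  rw [thickening_union]
  rcases lt_or_ge k N with hk | hk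
  · exact ((subset_biUnion_of_mem (mem_Iio.2 hk)).trans hFu).trans subset_union_left
  · exact (hN k hk).trans subset_union_right

theorem subset_thickening_inter_thickening {s t : Set X} {ε : ℝ} (hst : s ⊆ thickening ε t) :
    s ⊆ thickening ε (t ∩ thickening ε s) := by
  intro x hx
  obtain ⟨c, hct, hxc⟩ := mem_thickening_iff.1 (hst hx)
  have hcs : c ∈ thickening ε s := mem_thickening_iff.2 ⟨x, hx, by rwa [dist_comm]⟩
  exact mem_thickening_iff.2 ⟨c, ⟨hct, hcs⟩, hxc⟩

theorem not_totallyBounded_range_of_pairwise_le_dist {ι : Type*} [Infinite ι] {x : ι → X} {ε : ℝ}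
    (hε : 0 < ε) (hx : Pairwise fun i j => ε ≤ dist (x i) (x j)) :
    ¬ TotallyBounded (range x) := by
  intro hbounded
  obtain ⟨t, ht, hxt⟩ := totallyBounded_iff_subset_thickening.1 hbounded (ε / 2) (half_pos hε)
  have hcenter : ∀ i, ∃ c : t, dist (x i) c < ε / 2 := fun i => by
    simpa using mem_thickening_iff.1 (hxt (mem_range_self i))
  choose center hcenter using hcenter
  have : Finite t := ht.to_subtype
  obtain ⟨i, j, hij, hsame⟩ := Finite.exists_ne_map_eq_of_infinite center
  have hi := hcenter i
  rw [hsame] at hi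
  linarith [hx hij, hcenter j, dist_triangle_right (x i) (x j) (center j)]

theorem exists_seq_pairwise_le_dist_of_not_subset_thickening {S : ℕ → Set X} (hS : Antitone S)
    {ε : ℝ} (hcover : ∀ n, ∀ t : Set X, t.Finite → ¬ S n ⊆ thickening ε t) :
    ∃ x : ℕ → X, (∀ n, x n ∈ S n) ∧ Pairwise fun i j => ε ≤ dist (x i) (x j) := by
  obtain ⟨p, hmem, hrel⟩ := exists_seq_of_forall_finset_exists
    (fun p : ℕ × X => p.2 ∈ S p.1) (fun p q => p.1 < q.1 ∧ ε ≤ dist p.2 q.2) fun s _ => by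
      obtain ⟨z, hz, hzs⟩ :=
        not_subset.1 (hcover (s.sup Prod.fst + 1) (Prod.snd '' (s : Set (ℕ × X)))
          (s.finite_toSet.image _))
      refine ⟨(s.sup Prod.fst + 1, z), hz, fun p hp =>
        ⟨Nat.lt_succ_of_le (Finset.le_sup (f := Prod.fst) hp), ?_⟩⟩
      contrapose! hzs
      exact mem_thickening_iff.2 ⟨p.2, mem_image_of_mem _ hp, by rwa [dist_comm]⟩
  have hindex : StrictMono fun n => (p n).1 := fun m n hmn => (hrel m n hmn).1
  refine ⟨fun n => (p n).2, fun n => hS (hindex.id_le n) (hmem n), fun i j hij => ?_⟩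
  rcases hij.lt_or_gt with hlt | hgt
  · exact (hrel i j hlt).2
  · exact dist_comm (p j).2 (p i).2 ▸ (hrel j i hgt).2

theorem exists_uniformContinuous_le_and_eq_zero {ι : Type*} (x : ι → X) {r c : ι → ℝ}
    (hr : ∀ i, 0 < r i) (hc : ∀ i, 0 ≤ c i) (hsum : Summable c) :
    ∃ F : X → ℝ, UniformContinuous F ∧ (∀ i, c i ≤ F (x i)) ∧
      ∀ z, (∀ i, r i ≤ dist z (x i)) → F z = 0 := by
  let b : ι → X → ℝ := fun i z => c i * thickenedIndicator (hr i) {x i} z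
  have hb_nonneg : ∀ i z, 0 ≤ b i z := fun i z => mul_nonneg (hc i) NNReal.zero_le_coe
  have hb_le : ∀ i z, b i z ≤ c i := fun i z =>
    mul_le_of_le_one_right (hc i) (NNReal.coe_le_one.2 (thickenedIndicator_le_one (hr i) _ z))
  have hb_uc : ∀ i, UniformContinuous (b i) := fun i =>
    (uniformContinuous_subtype_val.comp
      (lipschitzWith_thickenedIndicator (hr i) {x i}).uniformContinuous).const_mul' (c i)
  have hb_summable : ∀ z, Summable fun i => b i z := fun z =>
    hsum.of_nonneg_of_le (hb_nonneg · z) (hb_le · z)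
  refine ⟨fun z => ∑' i, b i z, uniformContinuous_tsum hsum hb_uc fun i z => ?_, fun i => ?_,
    fun z hz => ?_⟩
  · rw [Real.norm_of_nonneg (hb_nonneg i z)]
    exact hb_le i z
  · have hb_center : b i (x i) = c i := by
      simp only [b, thickenedIndicator_one (hr i) _ (mem_singleton (x i)), NNReal.coe_one, mul_one]
    calc c i = b i (x i) := hb_center.symm
      _ ≤ ∑' j, b j (x i) := (hb_summable (x i)).le_tsum i fun j _ => hb_nonneg j _
  · have hb_zero : ∀ i, b i z = 0 := fun i => by
      have hz_notMem : z ∉ thickening (r i) {x i} := by simpa [thickening_singleton] using hz i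
      simp only [b, thickenedIndicator_zero (hr i) _ hz_notMem, NNReal.coe_zero, mul_zero]
    simp only [hb_zero, tsum_zero]

end PseudoMetric

section CrowdedPoints

/-- The points that have another point within distance `δ`. Their complement is the largest set
that is uniformly isolated with constant `δ`. -/
def crowdedPoints (X : Type*) [PseudoMetricSpace X] (δ : ℝ) : Set X :=
  {x | ∃ y, y ≠ x ∧ dist y x < δ}

/-- The condition through which all three conditions of the theorem are compared: the crowded
points become precompact as the scale of crowding tends to `0`. The centers of the covering balls
may be any points of the space. -/
def CrowdedPointsFinitelyCovered (X : Type*) [PseudoMetricSpace X] : Prop :=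
  ∀ ε > 0, ∃ δ > 0, ∃ t : Set X, t.Finite ∧ crowdedPoints X δ ⊆ thickening ε t

variable {X : Type*} [PseudoMetricSpace X]

theorem crowdedPoints_mono : Monotone (crowdedPoints X) :=
  fun _ _ hle _ ⟨y, hne, hlt⟩ => ⟨y, hne, hlt.trans_le hle⟩

theorem uniformContinuous_of_eq_on_crowdedPoints {Y : Type*} [UniformSpace Y] {f : X → Y} {δ : ℝ}
    (hδ : 0 < δ) {c : Y} (hf : ∀ x ∈ crowdedPoints X δ, f x = c) : UniformContinuous f := by
  intro U hU
  refine mem_map.2 <| mem_uniformity_dist.2 ⟨δ, hδ, fun x y hxy => ?_⟩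
  rcases eq_or_ne x y with rfl | hne
  · exact mem_preimage.2 (refl_mem_uniformity hU)
  · have hx : f x = c := hf x ⟨y, hne.symm, by rwa [dist_comm]⟩
    have hy : f y = c := hf y ⟨x, hne, hxy⟩
    simpa only [mem_preimage, hx, hy] using refl_mem_uniformity hU

theorem CrowdedPointsFinitelyCovered.exists_finite_subset_thickening
    (h : CrowdedPointsFinitelyCovered X) {ε : ℝ} (hε : 0 < ε) :
    ∃ δ > 0, δ ≤ ε ∧ ∃ t : Set X, t.Finite ∧ t ⊆ thickening ε (crowdedPoints X δ) ∧
      crowdedPoints X δ ⊆ thickening ε t := by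
  obtain ⟨δ, hδ, t, ht, hcover⟩ := h ε hε
  have hcover' := (crowdedPoints_mono (min_le_left δ ε)).trans hcover
  exact ⟨min δ ε, lt_min hδ hε, min_le_right δ ε, _, ht.inter_of_left _, inter_subset_right,
    subset_thickening_inter_thickening hcover'⟩

theorem CrowdedPointsFinitelyCovered.exists_totallyBounded
    (h : CrowdedPointsFinitelyCovered X) :
    ∃ L : Set X, TotallyBounded L ∧ ∀ ε > 0, ∃ δ > 0, crowdedPoints X δ ⊆ thickening ε L := by
  have hnet := fun k : ℕ => h.exists_finite_subset_thickening (Nat.one_div_pos_of_nat (n := k))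
  choose δ hδ hδle F hF hFsub hFcover using hnet
  have hsmall : ∀ ε > (0 : ℝ), ∀ᶠ k : ℕ in atTop, 1 / ((k : ℝ) + 1) < ε := fun ε hε =>
    tendsto_one_div_add_atTop_nhds_zero_nat.eventually_lt_const hε
  refine ⟨⋃ k, F k, totallyBounded_iUnion_of_eventually_subset_thickening
    (fun k => (hF k).totallyBounded) fun ε hε => ?_, fun ε hε => ?_⟩
  · obtain ⟨k, hk⟩ := (hsmall (ε / 2) (half_pos hε)).exists
    refine ⟨F k, hF k, ?_⟩
    filter_upwards [hsmall (ε / 2) (half_pos hε), hsmall (δ k) (hδ k)] with j hjε hjδ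
    calc F j ⊆ thickening (1 / (j + 1)) (crowdedPoints X (δ j)) := hFsub j
      _ ⊆ thickening (ε / 2) (crowdedPoints X (δ k)) :=
        (thickening_mono hjε.le _).trans
          (thickening_subset_of_subset _ (crowdedPoints_mono ((hδle j).trans hjδ.le)))
      _ ⊆ thickening (ε / 2) (thickening (ε / 2) (F k)) :=
        thickening_subset_of_subset _ ((hFcover k).trans (thickening_mono hk.le _))
      _ ⊆ thickening ε (F k) := by
        simpa only [add_halves] using thickening_thickening_subset (ε / 2) (ε / 2) (F k)
  · obtain ⟨k, hk⟩ := (hsmall ε hε).exists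
    exact ⟨δ k, hδ k, (hFcover k).trans <|
      (thickening_mono hk.le _).trans (thickening_subset_of_subset _ (subset_iUnion F k))⟩

theorem uniformContinuous_comp_of_crowdedPoints_subset_thickening {Y Z : Type*} [UniformSpace Y]
    [CompleteSpace Y] [UniformSpace Z] {L : Set X} (hL : TotallyBounded L)
    (hcrowded : ∀ ε > 0, ∃ δ > 0, crowdedPoints X δ ⊆ thickening ε L)
    {i : X → Y} (hi : UniformContinuous i) {f : Y → Z} (hf : Continuous f) :
    UniformContinuous fun x => f (i x) := by
  have hK : IsCompact (closure (i '' L)) :=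
    (hL.image hi).closure.isCompact_of_isClosed isClosed_closure
  intro U hU
  obtain ⟨V, hV, hVsymm, hVU⟩ := comp_symm_mem_uniformity_sets hU
  have hfK := hK.uniformContinuousAt_of_continuousAt f (fun _ _ => hf.continuousAt) hV
  obtain ⟨η, hη, hnear⟩ := mem_uniformity_dist.1 (hi hfK)
  have hVnear : ∀ l ∈ L, ∀ x, dist x l < η → (f (i l), f (i x)) ∈ V := fun l hl x hx =>
    hnear (dist_comm x l ▸ hx) (subset_closure (mem_image_of_mem i hl))
  obtain ⟨δ, hδ, hsub⟩ := hcrowded (η / 2) (half_pos hη)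
  refine mem_map.2 <| mem_uniformity_dist.2 ⟨min δ (η / 2), lt_min hδ (half_pos hη), ?_⟩
  intro x y hxy
  obtain ⟨hxyδ, hxyη⟩ := lt_min_iff.1 hxy
  rcases eq_or_ne x y with rfl | hne
  · exact mem_preimage.2 (refl_mem_uniformity hU)
  obtain ⟨l, hl, hyl⟩ := mem_thickening_iff.1 (hsub ⟨x, hne, hxyδ⟩)
  have hfx := hVnear l hl x (by linarith [dist_triangle x y l])
  have hfy := hVnear l hl y (by linarith)
  exact hVU ⟨f (i l), hVsymm.symm _ _ hfx, hfy⟩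

end CrowdedPoints

section TwinSequences

/-- An `ε`-separated sequence `x` together with a sequence `y` of distinct companions whose
distance to `x` tends to `0`. The bound `ε / 4` keeps each `y i` away from all `x j` with
`j ≠ i`, and `y` itself separated. -/
structure IsTwinSequence {X : Type*} [PseudoMetricSpace X] (x y : ℕ → X) (ε : ℝ) : Prop where
  le_dist : Pairwise fun i j => ε ≤ dist (x i) (x j)
  ne : ∀ i, y i ≠ x i
  dist_lt : ∀ i, dist (y i) (x i) < ε / 4
  tendsto : Tendsto (fun n => (y n, x n)) atTop (𝓤 X)

theorem exists_isTwinSequence_of_not_finitelyCovered {X : Type*} [PseudoMetricSpace X]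
    (h : ¬ CrowdedPointsFinitelyCovered X) :
    ∃ (x y : ℕ → X) (ε : ℝ), IsTwinSequence x y ε := by
  unfold CrowdedPointsFinitelyCovered at h
  push Not at h
  obtain ⟨ε, hε, hcover⟩ := h
  let r : ℕ → ℝ := fun n => min (1 / ((n : ℝ) + 1)) (ε / 4)
  have hr : Antitone r := fun m n hmn => min_le_min_right _ (Nat.one_div_le_one_div hmn)
  obtain ⟨x, hx, hsep⟩ := exists_seq_pairwise_le_dist_of_not_subset_thickening
    (crowdedPoints_mono.comp_antitone hr) fun n => hcover (r n) (by positivity)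
  choose y hne hdist using hx
  refine ⟨x, y, ε, hsep, hne, fun i => (hdist i).trans_le (min_le_right _ _), ?_⟩
  exact tendsto_uniformity_iff_dist_tendsto_zero.2 <|
    squeeze_zero (fun _ => dist_nonneg) (fun n => (hdist n).le.trans (min_le_left _ _))
      tendsto_one_div_add_atTop_nhds_zero_nat

namespace IsTwinSequence

section PseudoMetric

variable {X : Type*} [PseudoMetricSpace X] {x y : ℕ → X} {ε : ℝ}

theorem pos (h : IsTwinSequence x y ε) : 0 < ε := by
  linarith [h.dist_lt 0, dist_nonneg (x := y 0) (y := x 0)]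

theorem comp_strictMono (h : IsTwinSequence x y ε) {φ : ℕ → ℕ} (hφ : StrictMono φ) :
    IsTwinSequence (x ∘ φ) (y ∘ φ) ε where
  le_dist _ _ hij := h.le_dist (hφ.injective.ne hij)
  ne i := h.ne (φ i)
  dist_lt i := h.dist_lt (φ i)
  tendsto := h.tendsto.comp hφ.tendsto_atTop

theorem dist_self_le_dist (h : IsTwinSequence x y ε) (i j : ℕ) :
    dist (y j) (x j) ≤ dist (y i) (x j) := by
  rcases eq_or_ne i j with rfl | hij
  · exact le_rfl
  · linarith [h.le_dist hij, h.dist_lt i, h.dist_lt j, h.pos,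
      dist_triangle_left (x i) (x j) (y i)]

theorem half_le_dist_right (h : IsTwinSequence x y ε) :
    Pairwise fun i j => ε / 2 ≤ dist (y i) (y j) := fun i j hij => by
  linarith [h.le_dist hij, h.dist_lt i, h.dist_lt j, dist_comm (x i) (y i),
    dist_triangle4 (x i) (y i) (y j) (x j)]

theorem exists_dist_lt (h : IsTwinSequence x y ε) {Y : Type*} [PseudoMetricSpace Y] {f : X → Y}
    (hf : UniformContinuous f) {η : ℝ} (hη : 0 < η) : ∃ n, dist (f (y n)) (f (x n)) < η :=
  ((tendsto_uniformity_iff_dist_tendsto_zero.1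
    (Tendsto.comp hf h.tendsto)).eventually_lt_const hη).exists

end PseudoMetric

section Metric

variable {X : Type*} [MetricSpace X] {x y : ℕ → X} {ε : ℝ}

theorem map_isometry (h : IsTwinSequence x y ε) {Y : Type*} [PseudoMetricSpace Y] {i : X → Y}
    (hi : Isometry i) : IsTwinSequence (i ∘ x) (i ∘ y) ε where
  le_dist j k hjk := by simpa only [Function.comp_apply, hi.dist_eq] using h.le_dist hjk
  ne j := hi.injective.ne (h.ne j)
  dist_lt j := by simpa only [Function.comp_apply, hi.dist_eq] using h.dist_lt j
  tendsto := Tendsto.comp hi.uniformContinuous h.tendsto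

theorem dist_self_pos (h : IsTwinSequence x y ε) (i : ℕ) : 0 < dist (y i) (x i) :=
  dist_pos.2 (h.ne i)

theorem disjoint_range (h : IsTwinSequence x y ε) : Disjoint (range x) (range y) := by
  rw [disjoint_range_iff]
  intro j i hji
  have hpos : 0 < dist (y i) (x j) := (h.dist_self_pos j).trans_le (h.dist_self_le_dist i j)
  exact hpos.ne' (by rw [hji, dist_self])

theorem exists_continuous_not_uniformContinuous (h : IsTwinSequence x y ε) :
    ∃ f : X → ℝ, Continuous f ∧ ¬ UniformContinuous f := by
  have hclosed : ∀ {z : ℕ → X} {η : ℝ}, 0 < η → Pairwise (fun i j => η ≤ dist (z i) (z j)) →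
      IsClosed (range z) := fun hη hz =>
    isClosed_of_pairwise_le_dist hη hz.range_pairwise
  obtain ⟨f, hfx, hfy, -⟩ := exists_continuous_zero_one_of_isClosed
    (hclosed h.pos h.le_dist) (hclosed (half_pos h.pos) h.half_le_dist_right) h.disjoint_range
  refine ⟨f, f.continuous, fun hf => ?_⟩
  obtain ⟨n, hn⟩ := h.exists_dist_lt hf one_pos
  simp [hfx (mem_range_self n), hfy (mem_range_self n)] at hn

theorem bourbakiBounded_range (h : IsTwinSequence x y ε) (hring : IsRingUC X) :
    BourbakiBounded (range x) := by
  intro g hg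
  by_contra hunbounded
  have hnot : ¬ BddAbove (range fun n => |g (x n)|) := fun ⟨M, hM⟩ =>
    hunbounded ⟨M, forall_mem_range.2 fun n => hM (mem_range_self n)⟩
  obtain ⟨φ, hφ, hlarge⟩ := exists_strictMono_forall_lt_of_not_bddAbove hnot (2 ^ ·)
  have hsub := h.comp_strictMono hφ
  obtain ⟨F, hF, hFx, hFzero⟩ := exists_uniformContinuous_le_and_eq_zero (x ∘ φ)
    hsub.dist_self_pos (fun n => by positivity) summable_geometric_two
  have hFy : ∀ n, F (y (φ n)) = 0 := fun n => hFzero _ (hsub.dist_self_le_dist n)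
  obtain ⟨n, hn⟩ := hsub.exists_dist_lt (hring F g hF hg) one_pos
  have hge : 1 ≤ |F (x (φ n)) * g (x (φ n))| := by
    calc (1 : ℝ) = (1 / 2) ^ n * 2 ^ n := by rw [← mul_pow]; norm_num
      _ ≤ |F (x (φ n))| * |g (x (φ n))| := by
        gcongr
        · exact (hFx n).trans (le_abs_self _)
        · exact (hlarge n).le
      _ = |F (x (φ n)) * g (x (φ n))| := (abs_mul _ _).symm
  simp only [Function.comp_apply, hFy, zero_mul, dist_zero_left, Real.norm_eq_abs] at hn
  exact hn.not_ge hge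

end Metric

end IsTwinSequence

end TwinSequences

section MetricSpace

/-- A UC-space: every continuous real-valued function is uniformly continuous. -/
def IsUCSpace (Y : Type*) [UniformSpace Y] : Prop :=
  ∀ f : Y → ℝ, Continuous f → UniformContinuous f

variable {X : Type*} [MetricSpace X]

theorem enl_eq_thickening (s : Set X) (ε : ℝ) : enl s ε = thickening ε s :=
  thickening_eq_biUnion_ball.symm

theorem unifIsolated_univ_diff_iff {s : Set X} :
    UnifIsolated (univ \ s) ↔ ∃ δ > 0, crowdedPoints X δ ⊆ s := by
  refine exists_congr fun δ => and_congr_right fun hδ => ⟨?_, ?_⟩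
  · rintro hball x ⟨y, hne, hlt⟩
    by_contra hx
    have hy : y ∈ ball x δ := hlt
    rw [hball x ⟨mem_univ x, hx⟩] at hy
    exact hne hy
  · rintro hsub x ⟨-, hx⟩
    refine subset_antisymm (fun y hy => ?_) (singleton_subset_iff.2 (mem_ball_self hδ))
    by_contra hne
    exact hx (hsub ⟨y, hne, hy⟩)

theorem exists_unifIsolated_iff_exists_crowdedPoints_subset :
    (∃ L : Set X, TotallyBounded L ∧ ∀ ε > (0 : ℝ), UnifIsolated (univ \ enl L ε)) ↔
      ∃ L : Set X, TotallyBounded L ∧ ∀ ε > 0, ∃ δ > 0, crowdedPoints X δ ⊆ thickening ε L := by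
  simp only [enl_eq_thickening, unifIsolated_univ_diff_iff]

theorem BourbakiBounded.finite_diff_crowdedPoints {A : Set X} (hA : BourbakiBounded A) {δ : ℝ}
    (hδ : 0 < δ) : (A \ crowdedPoints X δ).Finite := by
  by_contra hinfinite
  let e : ℕ ↪ ↥(A \ crowdedPoints X δ) := Set.Infinite.natEmbedding _ hinfinite
  have he : Function.Injective fun n => (e n : X) := Subtype.val_injective.comp e.injective
  let f : X → ℝ := Function.extend (fun n => (e n : X)) (fun n => (n : ℝ)) 0
  have hf : UniformContinuous f := uniformContinuous_of_eq_on_crowdedPoints hδ fun x hx =>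
    Function.extend_apply' _ _ x fun ⟨n, hn⟩ => (e n).2.2 (hn ▸ hx)
  obtain ⟨M, hM⟩ := hA f hf
  obtain ⟨n, hn⟩ := exists_nat_gt M
  have hfn : f (e n) = n := he.extend_apply _ _ n
  have hle : |f (e n)| ≤ M := hM (e n) (e n).2.1
  rw [hfn, Nat.abs_cast] at hle
  exact hn.not_ge hle

theorem CrowdedPointsFinitelyCovered.totallyBounded_of_bourbakiBounded
    (h : CrowdedPointsFinitelyCovered X) {A : Set X} (hA : BourbakiBounded A) :
    TotallyBounded A := by
  refine totallyBounded_iff_subset_thickening.2 fun ε hε => ?_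
  obtain ⟨δ, hδ, t, ht, hcover⟩ := h ε hε
  refine ⟨t ∪ (A \ crowdedPoints X δ), ht.union (hA.finite_diff_crowdedPoints hδ), fun x hx => ?_⟩
  rw [thickening_union]
  by_cases hxδ : x ∈ crowdedPoints X δ
  · exact Or.inl (hcover hxδ)
  · exact Or.inr (self_subset_thickening hε _ ⟨hx, hxδ⟩)

theorem crowdedPointsFinitelyCovered_of_isRingUC (hring : IsRingUC X)
    (hA : ∀ A : Set X, BourbakiBounded A → TotallyBounded A) :
    CrowdedPointsFinitelyCovered X := by
  by_contra hnot
  obtain ⟨x, y, ε, htwin⟩ := exists_isTwinSequence_of_not_finitelyCovered hnot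
  exact not_totallyBounded_range_of_pairwise_le_dist htwin.pos htwin.le_dist
    (hA _ (htwin.bourbakiBounded_range hring))

theorem crowdedPointsFinitelyCovered_of_isUCSpace_completion
    (h : IsUCSpace (UniformSpace.Completion X)) : CrowdedPointsFinitelyCovered X := by
  by_contra hnot
  obtain ⟨x, y, ε, htwin⟩ := exists_isTwinSequence_of_not_finitelyCovered hnot
  have htwin' := htwin.map_isometry UniformSpace.Completion.coe_isometry
  obtain ⟨f, hf, hf_not⟩ := htwin'.exists_continuous_not_uniformContinuous
  exact hf_not (h f hf)

theorem isRingUC_of_isUCSpace_completion (h : IsUCSpace (UniformSpace.Completion X)) :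
    IsRingUC X := by
  intro f g hf hg
  have hprod := h
    (fun z => UniformSpace.Completion.extension f z * UniformSpace.Completion.extension g z)
    (UniformSpace.Completion.continuous_extension.mul UniformSpace.Completion.continuous_extension)
  simpa only [Function.comp_def, UniformSpace.Completion.extension_coe hf,
    UniformSpace.Completion.extension_coe hg] using
    hprod.comp (UniformSpace.Completion.uniformContinuous_coe X)

theorem isUCSpace_completion_of_crowdedPoints_subset_thickening {L : Set X} (hL : TotallyBounded L)
    (hcrowded : ∀ ε > 0, ∃ δ > 0, crowdedPoints X δ ⊆ thickening ε L) :
    IsUCSpace (UniformSpace.Completion X) := fun _ hf =>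
  uniformContinuous_of_comp_coe_completion hf <|
    uniformContinuous_comp_of_crowdedPoints_subset_thickening hL hcrowded
      (UniformSpace.Completion.uniformContinuous_coe X) hf

end MetricSpace

theorem stmt14 {X : Type*} [MetricSpace X] :
    List.TFAE
      [IsRingUC X ∧ ∀ A : Set X, BourbakiBounded A → TotallyBounded A,
       ∃ L : Set X, TotallyBounded L ∧
         ∀ ε > (0 : ℝ), UnifIsolated (Set.univ \ enl L ε),
       ∀ f : UniformSpace.Completion X → ℝ, Continuous f → UniformContinuous f] := by
  tfae_have 1 → 2 := fun ⟨hring, hA⟩ =>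
    exists_unifIsolated_iff_exists_crowdedPoints_subset.2
      (crowdedPointsFinitelyCovered_of_isRingUC hring hA).exists_totallyBounded
  tfae_have 2 → 3 := fun h => by
    obtain ⟨L, hL, hcrowded⟩ := exists_unifIsolated_iff_exists_crowdedPoints_subset.1 h
    exact isUCSpace_completion_of_crowdedPoints_subset_thickening hL hcrowded
  tfae_have 3 → 1 := fun h =>
    ⟨isRingUC_of_isUCSpace_completion h, fun _ hA =>
      (crowdedPointsFinitelyCovered_of_isUCSpace_completion h).totallyBounded_of_bourbakiBounded hA⟩
  tfae_finish
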